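/- arXiv:1301.5697 — 2 statements merged into one kernel-verified Lean document; each statement's English description precedes it below -/
import Mathlib

section
/- Let D be an oriented bipartite graph with bipartition (A,B), where |A| = m ≥ 2 and |B| = n ≥ 2. If every vertex u in A has out-degree at least n/3 and every vertex v in B has out-degree at least m/3, then D contains a directed cycle of length 4. (Exceptional case excluded: assume D is not isomorphic to the extremal digraph D*(m,n) described below.) Here D*(m,n) is defined when 3 | m and 3 | n by partitioning A = M0 ∪ M1 ∪ M2 with |Mi| = m/3 and B = N0 ∪ N1 ∪ N2 with |Ni| = n/3, and taking all arcs from Mi to Ni and all arcs from Ni to M(i+1 mod 3), for i = 0,1,2. -/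
open Finset

/-- The digraph given by arc relation `E` contains a directed cycle of length 4. -/
def HasDirC4 {V : Type*} (E : V → V → Prop) : Prop :=
  ∃ a b c d : V, a ≠ b ∧ a ≠ c ∧ a ≠ d ∧ b ≠ c ∧ b ≠ d ∧ c ≠ d ∧
    E a b ∧ E b c ∧ E c d ∧ E d a

/-- Out-degree of a vertex in the digraph `E`. -/
def OutDeg {V : Type*} [Fintype V] (E : V → V → Prop) [DecidableRel E] (u : V) : ℕ :=
  (Finset.univ.filter fun w => E u w).card

/-- In-degree of a vertex in the digraph `E`. -/
def InDeg {V : Type*} [Fintype V] (E : V → V → Prop) [DecidableRel E] (u : V) : ℕ :=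
  (Finset.univ.filter fun w => E w u).card

/-- `E` is the extremal digraph `D*(|A|,|B|)` on the bipartition `(A,B)`:
the parts split into three equal blocks `M i`, `N i` with all arcs from
`M i` to `N i` and from `N i` to `M (i+1)`, indices mod 3. -/
def IsDStar {V : Type*} [DecidableEq V] (A B : Finset V) (E : V → V → Prop) : Prop :=
  ∃ M N : ZMod 3 → Finset V,
    (∀ i j, i ≠ j → Disjoint (M i) (M j)) ∧
    (∀ i j, i ≠ j → Disjoint (N i) (N j)) ∧
    M 0 ∪ M 1 ∪ M 2 = A ∧ N 0 ∪ N 1 ∪ N 2 = B ∧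
    (∀ i, 3 * (M i).card = A.card) ∧ (∀ i, 3 * (N i).card = B.card) ∧
    (∀ u v, E u v ↔ ∃ i, (u ∈ M i ∧ v ∈ N i) ∨ (u ∈ N i ∧ v ∈ M (i + 1)))


lemma aux_cs (c c' r r' s s' : ℝ) (hr : 0 ≤ r) (hr' : 0 ≤ r') (hs : 0 ≤ s) (hs' : 0 ≤ s')
    (h : c ^ 2 = r * s) (h' : c' ^ 2 = r' * s') : (c - c') ^ 2 ≤ (s + s') * (r + r') := by
  have h1 : (c * c') ^ 2 = (s * r') * (s' * r) := by rw [mul_pow, h, h']; ring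
  have h2 : 0 ≤ s * r' := by positivity
  have h3 : 0 ≤ s' * r := by positivity
  have h4 : |2 * (c * c')| ≤ s * r' + s' * r := by
    apply abs_le_of_sq_le_sq (h := ?_) (hb := add_nonneg h2 h3)
    nlinarith [sq_nonneg (s * r' - s' * r)]
  have := neg_abs_le (2 * (c * c'))
  nlinarith

/-- Diagonal version of the key inequality. -/
lemma key_diag {β α : Type*} [Fintype β] [Fintype α] [DecidableEq β] [Nontrivial β]
    (f d : β → α → ℝ) (horth : ∀ i j, i ≠ j → ∑ a, d i a * d j a = 0) :
    ∑ i, ∑ j, (∑ a, f i a * d j a - ∑ a, f j a * d i a) ^ 2 ≤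
      4 * (∑ i, ∑ a, f i a ^ 2) ^ 2 +
        ∑ i, ∑ j, (∑ a, f i a * f j a - ∑ a, d i a * d j a) ^ 2 := by
  set s : β → ℝ := fun i => ∑ a, d i a ^ 2 with hs
  set n : β → ℝ := fun i => ∑ a, f i a ^ 2 with hn
  set c : β → β → ℝ := fun i j => ∑ a, f i a * d j a with hc
  have hs0 : ∀ i, 0 ≤ s i := fun i => Finset.sum_nonneg fun a _ => sq_nonneg _
  have hn0 : ∀ i, 0 ≤ n i := fun i => Finset.sum_nonneg fun a _ => sq_nonneg _
  have hcz : ∀ i j, s j = 0 → c i j = 0 := by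
    intro i j h
    have := (Finset.sum_eq_zero_iff_of_nonneg (fun a _ => sq_nonneg (d j a))).1 h
    refine Finset.sum_eq_zero fun a ha => ?_
    rw [pow_eq_zero_iff (two_ne_zero) |>.1 (this a ha), mul_zero]
  set r : β → β → ℝ := fun i j => c i j ^ 2 / s j with hr
  have hr0 : ∀ i j, 0 ≤ r i j := fun i j => div_nonneg (sq_nonneg _) (hs0 j)
  have hcr : ∀ i j, c i j ^ 2 = r i j * s j := by
    intro i j
    by_cases h : s j = 0
    · simp [hcz i j h, h]
    · simp only [hr]; field_simp
  -- Bessel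
  have bessel : ∀ i, ∑ j, r i j ≤ n i := by
    intro i
    set w : β → ℝ := fun j => c i j / s j with hw
    have h0 : 0 ≤ ∑ a, (f i a - ∑ j, w j * d j a) ^ 2 := Finset.sum_nonneg fun a _ => sq_nonneg _
    have h1 : ∑ a, (f i a - ∑ j, w j * d j a) ^ 2
        = n i - 2 * ∑ j, w j * c i j + ∑ j, w j ^ 2 * s j := by
      have e1 : ∑ j, w j * c i j = ∑ a, f i a * ∑ j, w j * d j a := by
        simp only [hc, Finset.mul_sum]
        rw [Finset.sum_comm]
        refine Finset.sum_congr rfl fun a _ => Finset.sum_congr rfl fun j _ => by ring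
      have e2 : ∑ j, w j ^ 2 * s j = ∑ a, (∑ j, w j * d j a) ^ 2 := by
        have : ∀ a, (∑ j, w j * d j a) ^ 2 = ∑ j, ∑ k, w j * w k * (d j a * d k a) := by
          intro a
          rw [sq, Finset.sum_mul_sum]
          refine Finset.sum_congr rfl fun a _ => Finset.sum_congr rfl fun j _ => by ring
        simp only [this]
        rw [Finset.sum_comm]
        refine Finset.sum_congr rfl fun j _ => ?_
        rw [Finset.sum_comm, Finset.sum_eq_single j]
        · rw [← Finset.mul_sum, hs]; simp only [sq]
        · intro k _ hk
          rw [← Finset.mul_sum, horth j k hk.symm, mul_zero]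
        · simp
      rw [e1, e2, Finset.mul_sum, ← Finset.sum_sub_distrib, ← Finset.sum_add_distrib]
      refine Finset.sum_congr rfl fun a _ => by ring
    have h2 : ∑ j, w j * c i j = ∑ j, r i j :=
      Finset.sum_congr rfl fun j _ => by simp only [hw, hr]; ring
    have h3 : ∑ j, w j ^ 2 * s j = ∑ j, r i j := by
      refine Finset.sum_congr rfl fun j _ => ?_
      by_cases h : s j = 0
      · simp [hr, h]
      · simp only [hw, hr]; field_simp
    rw [h1, h2, h3] at h0
    linarith
  obtain ⟨⟨u, v⟩, huv, hmax⟩ : ∃ x ∈ (univ : Finset (β × β)).filter (fun x : β × β => x.1 ≠ x.2),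
      ∀ y ∈ (univ : Finset (β × β)).filter (fun x : β × β => x.1 ≠ x.2), s y.1 + s y.2 ≤ s x.1 + s x.2 := by
    apply Finset.exists_max_image
    obtain ⟨x, y, h⟩ := exists_pair_ne β
    exact ⟨(x, y), by simp [h]⟩
  simp only [mem_filter, mem_univ, true_and, Prod.forall] at huv hmax
  set S := s u + s v with hS
  have hS0 : 0 ≤ S := add_nonneg (hs0 u) (hs0 v)
  set N := ∑ i, n i with hN
  have hN0 : 0 ≤ N := Finset.sum_nonneg fun i _ => hn0 i
  have hb : ∑ i, ∑ j, (c i j - c j i) ^ 2 ≤ 2 * N * S := by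
    have h1 : ∑ i, ∑ j, (c i j - c j i) ^ 2 ≤ ∑ i, ∑ j, S * (r i j + r j i) := by
      refine Finset.sum_le_sum fun i _ => Finset.sum_le_sum fun j _ => ?_
      by_cases h : i = j
      · subst h; simp only [sub_self]
        have := mul_nonneg hS0 (add_nonneg (hr0 i i) (hr0 i i)); simpa using this
      · have h1 := aux_cs (c i j) (c j i) (r i j) (r j i) (s j) (s i) (hr0 _ _) (hr0 _ _) (hs0 _)
          (hs0 _) (hcr _ _) (hcr _ _)
        refine h1.trans (mul_le_mul_of_nonneg_right ?_ (add_nonneg (hr0 _ _) (hr0 _ _)))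
        have := hmax i j h
        linarith
    have h2 : ∑ i, ∑ j, S * (r i j + r j i) = 2 * S * ∑ i, ∑ j, r i j := by
      have : ∑ i, ∑ j, r j i = ∑ i, ∑ j, r i j := Finset.sum_comm
      simp only [← Finset.mul_sum, Finset.sum_add_distrib, this]; ring
    have h3 : ∑ i, ∑ j, r i j ≤ N := Finset.sum_le_sum fun i _ => bessel i
    rw [h2] at h1
    nlinarith
  have ha : ∀ i, ∑ a, f i a * f i a - ∑ a, d i a * d i a = n i - s i := by
    intro i; simp only [hn, hs, sq]
  have hA : (n u - s u) ^ 2 + (n v - s v) ^ 2 ≤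
      ∑ i, ∑ j, (∑ a, f i a * f j a - ∑ a, d i a * d j a) ^ 2 := by
    have h1 : ∀ i, (n i - s i) ^ 2 ≤ ∑ j, (∑ a, f i a * f j a - ∑ a, d i a * d j a) ^ 2 := by
      intro i
      rw [← ha i]
      exact Finset.single_le_sum (f := fun j => (∑ a, f i a * f j a - ∑ a, d i a * d j a) ^ 2)
        (fun j _ => sq_nonneg _) (mem_univ i)
    have h2 : ∑ i ∈ ({u, v} : Finset β), (n i - s i) ^ 2 ≤ ∑ i, (n i - s i) ^ 2 :=
      Finset.sum_le_univ_sum_of_nonneg fun i => sq_nonneg _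
    rw [Finset.sum_pair huv] at h2
    exact h2.trans (Finset.sum_le_sum fun i _ => h1 i)
  have hNuv : n u + n v ≤ N := by
    have : ∑ i ∈ ({u, v} : Finset β), n i ≤ ∑ i, n i :=
      Finset.sum_le_univ_sum_of_nonneg hn0
    rwa [Finset.sum_pair huv] at this
  refine hb.trans ?_
  refine le_trans ?_ (add_le_add_right hA _)
  by_cases h : S ≤ N
  · nlinarith [sq_nonneg (n u - s u), sq_nonneg (n v - s v)]
  · have h1 : 0 ≤ S - N := by linarith
    have h2 : (S - N) ^ 2 ≤ (S - (n u + n v)) ^ 2 := by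
      apply pow_le_pow_left₀ h1; linarith
    have h3 : (S - (n u + n v)) ^ 2 ≤ 2 * ((n u - s u) ^ 2 + (n v - s v) ^ 2) := by
      rw [hS]; nlinarith [sq_nonneg ((n u - s u) - (n v - s v))]
    nlinarith [sq_nonneg (S - 3 * N)]

open Matrix in
lemma key_ineq_diag {β α : Type*} [Fintype β] [Fintype α] [DecidableEq β] [Nontrivial β]
    (P T : Matrix β α ℝ) (hd : ∀ i j, i ≠ j → ((P - T) * (P - T)ᵀ) i j = 0) :
    0 ≤ (trace ((P + T) * (P + T)ᵀ)) ^ 2 / 4 + trace (P * Tᵀ * (P * Tᵀ)) := by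
  have h := key_diag (P + T) (P - T) (by
    intro i j hij
    simpa [Matrix.mul_apply] using hd i j hij)
  have e1 : trace ((P + T) * (P + T)ᵀ) = ∑ i, ∑ a, (P + T) i a ^ 2 := by
    simp only [Matrix.trace, Matrix.diag, Matrix.mul_apply, Matrix.transpose_apply, sq]
  have e2 : 16 * trace (P * Tᵀ * (P * Tᵀ)) =
     ∑ i, ∑ j, (∑ a, (P + T) i a * (P + T) j a - ∑ a, (P - T) i a * (P - T) j a) ^ 2
     - ∑ i, ∑ j, (∑ a, (P + T) i a * (P - T) j a - ∑ a, (P + T) j a * (P - T) i a) ^ 2 := by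
    set X := P * Tᵀ with hX
    have h1 : ∀ i j, ∑ a, (P + T) i a * (P + T) j a - ∑ a, (P - T) i a * (P - T) j a
        = 2 * (X i j + X j i) := by
      intro i j
      simp only [hX, Matrix.mul_apply, Matrix.transpose_apply, Matrix.add_apply, Matrix.sub_apply]
      rw [← Finset.sum_sub_distrib, ← Finset.sum_add_distrib, Finset.mul_sum]
      exact Finset.sum_congr rfl fun a _ => by ring
    have h2 : ∀ i j, ∑ a, (P + T) i a * (P - T) j a - ∑ a, (P + T) j a * (P - T) i a
        = 2 * (X j i - X i j) := by
      intro i j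
      simp only [hX, Matrix.mul_apply, Matrix.transpose_apply, Matrix.add_apply, Matrix.sub_apply]
      rw [← Finset.sum_sub_distrib, ← Finset.sum_sub_distrib, Finset.mul_sum]
      exact Finset.sum_congr rfl fun a _ => by ring
    simp only [h1, h2, Matrix.trace, Matrix.diag, Matrix.mul_apply (M := X) (N := X)]
    rw [Finset.mul_sum, ← Finset.sum_sub_distrib]
    refine Finset.sum_congr rfl fun i _ => ?_
    rw [Finset.mul_sum, ← Finset.sum_sub_distrib]
    exact Finset.sum_congr rfl fun a _ => by ring
  rw [e1]
  linarith

open Matrix in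
lemma key_ineq {β α : Type*} [Fintype β] [Fintype α] [DecidableEq β] [Nontrivial β]
    (P T : Matrix β α ℝ) :
    0 ≤ (trace ((P + T) * (P + T)ᵀ)) ^ 2 / 4 + trace (P * Tᵀ * (P * Tᵀ)) := by
  have hH : ((P - T) * (P - T)ᵀ).IsHermitian := by
    have := Matrix.isHermitian_mul_conjTranspose_self (P - T)
    rwa [conjTranspose_eq_transpose_of_trivial] at this
  obtain ⟨U, hU, hUd⟩ : ∃ U : Matrix β β ℝ, U * Uᵀ = 1 ∧
      ∀ i j, i ≠ j → (Uᵀ * ((P - T) * (P - T)ᵀ) * U) i j = 0 := by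
    refine ⟨hH.eigenvectorUnitary, ?_, ?_⟩
    · have := Unitary.coe_mul_star_self hH.eigenvectorUnitary
      rw [Unitary.coe_star] at this
      rwa [star_eq_conjTranspose, conjTranspose_eq_transpose_of_trivial] at this
    · intro i j hij
      have h1 := hH.spectral_theorem
      have h2 := Unitary.coe_star_mul_self hH.eigenvectorUnitary
      rw [star_eq_conjTranspose, conjTranspose_eq_transpose_of_trivial] at h2
      rw [Unitary.conjStarAlgAut_apply] at h1
      rw [star_eq_conjTranspose, conjTranspose_eq_transpose_of_trivial] at h1
      set W : Matrix β β ℝ := (hH.eigenvectorUnitary : Matrix β β ℝ)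
      rw [h1]
      have : ∀ X : Matrix β β ℝ, Wᵀ * (W * X * Wᵀ) * W = X := by
        intro X
        calc Wᵀ * (W * X * Wᵀ) * W = (Wᵀ * W) * X * (Wᵀ * W) := by simp only [Matrix.mul_assoc]
          _ = X := by rw [h2]; simp
      rw [this]
      exact Matrix.diagonal_apply_ne _ hij
  have h := key_ineq_diag (Uᵀ * P) (Uᵀ * T) (by
    intro i j hij
    have := hUd i j hij
    rw [← Matrix.mul_sub, Matrix.transpose_mul, Matrix.transpose_transpose]
    simpa only [Matrix.mul_assoc] using this)
  have e : ∀ X Y : Matrix β α ℝ, (Uᵀ * X) * (Uᵀ * Y)ᵀ = Uᵀ * (X * Yᵀ) * U := by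
    intro X Y
    rw [Matrix.transpose_mul, Matrix.transpose_transpose]; simp only [Matrix.mul_assoc]
  have tr : ∀ X : Matrix β β ℝ, trace (Uᵀ * X * U) = trace X := by
    intro X
    rw [Matrix.trace_mul_comm, ← Matrix.mul_assoc, hU, Matrix.one_mul]
  rw [← Matrix.mul_add, e, e, tr] at h
  have e3 : ∀ X : Matrix β β ℝ, Uᵀ * X * U * (Uᵀ * X * U) = Uᵀ * (X * X) * U := by
    intro X
    calc Uᵀ * X * U * (Uᵀ * X * U) = Uᵀ * X * (U * Uᵀ) * X * U := by simp only [Matrix.mul_assoc]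
      _ = _ := by rw [hU]; simp only [Matrix.mul_assoc, Matrix.one_mul]
  rwa [e3, tr] at h

lemma lin_coeff_zero (c1 c2 c3 c4 : ℝ)
    (h : ∀ ε : ℝ, 0 ≤ c1 * ε + c2 * ε ^ 2 + c3 * ε ^ 3 + c4 * ε ^ 4) : c1 = 0 := by
  set g : ℝ → ℝ := fun ε => c1 * ε + c2 * ε ^ 2 + c3 * ε ^ 3 + c4 * ε ^ 4 with hg
  have hmin : IsLocalMin g 0 := Filter.Eventually.of_forall fun x => by
    simpa [hg] using h x
  have hd : HasDerivAt g c1 0 := by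
    have := (((hasDerivAt_id (0:ℝ)).const_mul c1).add (((hasDerivAt_id (0:ℝ)).pow 2).const_mul c2)).add
      (((hasDerivAt_id (0:ℝ)).pow 3).const_mul c3) |>.add (((hasDerivAt_id (0:ℝ)).pow 4).const_mul c4)
    refine this.congr_deriv ?_
    simp
  exact hmin.hasDerivAt_eq_zero hd

open Matrix in
lemma key_eq {β α : Type*} [Fintype β] [Fintype α] [DecidableEq β] [DecidableEq α] [Nontrivial β]
    (P T : Matrix β α ℝ) (h2 : trace ((P + T) * (P + T)ᵀ) = 2)
    (h1 : trace (P * Tᵀ * (P * Tᵀ)) = -1) : P + T + T * Pᵀ * T = 0 := by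
  ext b a
  set Z : Matrix β α ℝ := Matrix.single b a 1 with hZ
  set u := trace (Z * (P + T)ᵀ) with hu
  set w := trace (Z * Zᵀ) with hw
  set X := P * Tᵀ with hX
  set y := trace (Z * Tᵀ * X) with hy
  set z := trace (Z * Tᵀ * (Z * Tᵀ)) with hz
  have key : ∀ ε : ℝ, 0 ≤ (2 * u + 2 * y) * ε + (w + u ^ 2 + z) * ε ^ 2 + (u * w) * ε ^ 3 +
      (w ^ 2 / 4) * ε ^ 4 := by
    intro ε
    have h := key_ineq (P + ε • Z) T
    have e1 : trace ((P + ε • Z + T) * (P + ε • Z + T)ᵀ) = 2 + 2 * u * ε + w * ε ^ 2 := by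
      have : P + ε • Z + T = (P + T) + ε • Z := by abel
      have h3 : trace ((P + T) * Zᵀ) = u := by
        rw [← Matrix.trace_transpose, Matrix.transpose_mul, Matrix.transpose_transpose]
      rw [this, Matrix.transpose_add, Matrix.add_mul, Matrix.mul_add, Matrix.mul_add]
      simp only [Matrix.trace_add, Matrix.transpose_smul, Matrix.mul_smul, Matrix.smul_mul,
        Matrix.trace_smul, smul_eq_mul, h2, h3, ← hu, ← hw]
      ring
    have e2 : trace ((P + ε • Z) * Tᵀ * ((P + ε • Z) * Tᵀ)) = -1 + 2 * y * ε + z * ε ^ 2 := by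
      have h3 : trace (X * (Z * Tᵀ)) = y := Matrix.trace_mul_comm _ _
      rw [Matrix.add_mul, ← hX, Matrix.smul_mul, Matrix.add_mul, Matrix.mul_add, Matrix.mul_add]
      simp only [Matrix.trace_add, Matrix.mul_smul, Matrix.smul_mul,
        Matrix.trace_smul, smul_eq_mul, h1, h3, ← hy, ← hz]
      ring
    rw [e1, e2] at h
    nlinarith
  have h3 := lin_coeff_zero _ _ _ _ key
  have hu' : u = (P + T) b a := by
    rw [hu, hZ, Matrix.trace_single_mul]; simp
  have hy' : y = (T * Pᵀ * T) b a := by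
    have : T * Pᵀ * T = (Tᵀ * X)ᵀ := by simp [hX, Matrix.mul_assoc]
    rw [this, hy, hZ, Matrix.mul_assoc, Matrix.trace_single_mul]; simp
  rw [Matrix.add_apply, ← hu', ← hy']
  simp; linarith

/-- Row-normalised adjacency matrix. -/
noncomputable def rowMat {β α : Type*} [Fintype α] (p : β → α → Prop) [∀ b, DecidablePred (p b)] :
    Matrix β α ℝ :=
  Matrix.of fun b a => if p b a then 1 / ((univ.filter (p b)).card : ℝ) else 0

lemma rowMat_apply {β α : Type*} [Fintype α] (p : β → α → Prop) [∀ b, DecidablePred (p b)]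
    (b : β) (a : α) :
    rowMat p b a = if p b a then 1 / ((univ.filter (p b)).card : ℝ) else 0 := rfl

lemma rowMat_nonneg {β α : Type*} [Fintype α] (p : β → α → Prop) [∀ b, DecidablePred (p b)]
    (b : β) (a : α) : 0 ≤ rowMat p b a := by
  rw [rowMat_apply]; split_ifs <;> positivity

lemma rowMat_sum {β α : Type*} [Fintype α] (p : β → α → Prop) [∀ b, DecidablePred (p b)]
    (b : β) (h : 0 < (univ.filter (p b)).card) : ∑ a, rowMat p b a = 1 := by
  simp only [rowMat_apply]
  rw [← Finset.sum_filter, Finset.sum_const, nsmul_eq_mul]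
  have : ((univ.filter (p b)).card : ℝ) ≠ 0 := by exact_mod_cast h.ne'
  field_simp

lemma rowMat_sum_sq {β α : Type*} [Fintype α] (p : β → α → Prop) [∀ b, DecidablePred (p b)]
    (b : β) (h : 0 < (univ.filter (p b)).card) :
    ∑ a, rowMat p b a ^ 2 = 1 / ((univ.filter (p b)).card : ℝ) := by
  have : ∀ a, rowMat p b a ^ 2 = if p b a then (1 / ((univ.filter (p b)).card : ℝ)) ^ 2 else 0 := by
    intro a; rw [rowMat_apply]; split_ifs <;> simp
  simp only [this]
  rw [← Finset.sum_filter, Finset.sum_const, nsmul_eq_mul]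
  have : ((univ.filter (p b)).card : ℝ) ≠ 0 := by exact_mod_cast h.ne'
  field_simp

/-- Sum of squares of the centred matrix. -/
lemma rowMat_centred {β α : Type*} [Fintype β] [Fintype α] [Nonempty α] (p : β → α → Prop)
    [∀ b, DecidablePred (p b)] (h : ∀ b, 0 < (univ.filter (p b)).card) :
    ∑ b, ∑ a, (rowMat p b a - 1 / (Fintype.card α : ℝ)) ^ 2 =
      ∑ b, (1 / ((univ.filter (p b)).card : ℝ) - 1 / (Fintype.card α : ℝ)) := by
  refine Finset.sum_congr rfl fun b _ => ?_
  have hm : (Fintype.card α : ℝ) ≠ 0 := by exact_mod_cast Fintype.card_ne_zero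
  have e : ∀ a, (rowMat p b a - 1 / (Fintype.card α : ℝ)) ^ 2 =
      rowMat p b a ^ 2 - 2 / (Fintype.card α : ℝ) * rowMat p b a + (1 / (Fintype.card α : ℝ)) ^ 2 := by
    intro a; ring
  simp only [e]
  rw [Finset.sum_add_distrib, Finset.sum_sub_distrib, ← Finset.mul_sum, rowMat_sum p b (h b),
    rowMat_sum_sq p b (h b), Finset.sum_const, Finset.card_univ, nsmul_eq_mul]
  field_simp
  ring

set_option maxHeartbeats 1000000 in
open Matrix in
lemma core {β α : Type*} [Fintype β] [Fintype α] [DecidableEq β] [DecidableEq α] [Nontrivial β]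
    [Nonempty α] (p : β → α → Prop) (q : α → β → Prop)
    [∀ b, DecidablePred (p b)] [∀ a, DecidablePred (q a)] [∀ a, DecidablePred (fun b => p b a)]
    (h2 : ∀ b a, p b a → ¬ q a b)
    (h4 : ∀ b a b' a', p b a → q a b' → p b' a' → ¬ q a' b)
    (hp : ∀ b, Fintype.card α ≤ 3 * (univ.filter (p b)).card)
    (hq : ∀ a, Fintype.card β ≤ 3 * (univ.filter (q a)).card) :
    (∀ b, 3 * (univ.filter (p b)).card = Fintype.card α) ∧
    (∀ a, 3 * (univ.filter (q a)).card = Fintype.card β) ∧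
    (∀ a, 3 * (univ.filter (fun b => p b a)).card = Fintype.card β) ∧
    (∀ a b x y, q a x → p x y → q y b → ¬ q a b) := by
  have hβ : 0 < Fintype.card β := Fintype.card_pos
  have hα : 0 < Fintype.card α := Fintype.card_pos
  have hp0 : ∀ b, 0 < (univ.filter (p b)).card := fun b => by have := hp b; omega
  have hq0 : ∀ a, 0 < (univ.filter (q a)).card := fun b => by have := hq b; omega
  set m : ℝ := (Fintype.card α : ℝ) with hm
  set n : ℝ := (Fintype.card β : ℝ) with hn
  have hm0 : 0 < m := by rw [hm]; exact_mod_cast hα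
  have hn0 : 0 < n := by rw [hn]; exact_mod_cast hβ
  set P := rowMat p with hP
  set Q := rowMat q with hQ
  have hP1 : P *ᵥ 1 = 1 := by
    ext b; simp only [mulVec, dotProduct, Pi.one_apply, mul_one]; exact rowMat_sum p b (hp0 b)
  have hQ1 : Q *ᵥ 1 = 1 := by
    ext b; simp only [mulVec, dotProduct, Pi.one_apply, mul_one]; exact rowMat_sum q b (hq0 b)
  have hPn : ∀ b a, 0 ≤ P b a := rowMat_nonneg p
  have hQn : ∀ b a, 0 ≤ Q b a := rowMat_nonneg q
  have hPne : ∀ b a, P b a ≠ 0 → p b a := by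
    intro b a h; by_contra h'; exact h (by simp [hP, rowMat_apply, h'])
  have hQne : ∀ b a, Q b a ≠ 0 → q b a := by
    intro b a h; by_contra h'; exact h (by simp [hQ, rowMat_apply, h'])
  have hPQ : ∀ b a, P b a * Q a b = 0 := by
    intro b a
    by_contra h
    exact h2 b a (hPne _ _ (left_ne_zero_of_mul h)) (hQne _ _ (right_ne_zero_of_mul h))
  have htr1 : trace (P * Q) = 0 := by
    simp only [trace, Matrix.diag, mul_apply, hPQ, Finset.sum_const_zero]
  have htr2 : trace (P * Q * (P * Q)) = 0 := by
    simp only [trace, Matrix.diag]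
    refine Finset.sum_eq_zero fun b _ => ?_
    rw [mul_apply]
    refine Finset.sum_eq_zero fun b' _ => ?_
    rw [mul_apply, mul_apply, Finset.sum_mul_sum]
    refine Finset.sum_eq_zero fun a _ => Finset.sum_eq_zero fun a' _ => ?_
    by_contra h
    have h1 := left_ne_zero_of_mul h
    have h3 := right_ne_zero_of_mul h
    exact h4 b a b' a' (hPne _ _ (left_ne_zero_of_mul h1)) (hQne _ _ (right_ne_zero_of_mul h1))
      (hPne _ _ (left_ne_zero_of_mul h3)) (hQne _ _ (right_ne_zero_of_mul h3))
  set P' : Matrix β α ℝ := P - vecMulVec 1 (fun _ => 1 / m) with hP'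
  set Q' : Matrix α β ℝ := Q - vecMulVec 1 (fun _ => 1 / n) with hQ'
  have hP'1 : P' *ᵥ 1 = 0 := by
    rw [hP', sub_mulVec, hP1, vecMulVec_mulVec]
    ext b
    simp [dotProduct, ← hm, hm0.ne']
  have hQ'1 : Q' *ᵥ 1 = 0 := by
    rw [hQ', sub_mulVec, hQ1, vecMulVec_mulVec]
    ext b
    simp [dotProduct, ← hn, hn0.ne']
  set c : β → ℝ := (fun _ => 1 / m) ᵥ* Q with hc
  have hc1 : c ⬝ᵥ 1 = 1 := by
    rw [hc, ← dotProduct_mulVec, hQ1]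
    simp [dotProduct, ← hm, hm0.ne']
  have hX : P' * Q' = P * Q - vecMulVec 1 c := by
    rw [hQ', Matrix.mul_sub, mul_vecMulVec, hP'1, zero_vecMulVec, sub_zero, hP', Matrix.sub_mul,
      vecMulVec_mul]
  have hPQ1 : (P * Q) *ᵥ 1 = 1 := by rw [← mulVec_mulVec, hQ1, hP1]
  have hT1 : trace (P' * Q') = -1 := by
    rw [hX, trace_sub, htr1, trace_vecMulVec, dotProduct_comm, hc1]; norm_num
  have hT2 : trace (P' * Q' * (P' * Q')) = -1 := by
    have e1 : trace (vecMulVec 1 c * (P * Q)) = 1 := by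
      rw [trace_mul_comm, mul_vecMulVec, hPQ1, trace_vecMulVec, dotProduct_comm, hc1]
    rw [hX, Matrix.sub_mul, Matrix.mul_sub, Matrix.mul_sub, trace_sub, trace_sub, trace_sub, htr2,
      e1, mul_vecMulVec, hPQ1, mul_vecMulVec, trace_vecMulVec, dotProduct_comm 1 c, hc1,
      vecMulVec_mulVec, hc1, MulOpposite.op_one, one_smul, trace_vecMulVec, dotProduct_comm 1 c, hc1]
    norm_num
  set r : ℝ := Real.sqrt (m / n) with hr
  have hr0 : 0 < r := Real.sqrt_pos.2 (div_pos hm0 hn0)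
  have hr2 : r ^ 2 = m / n := Real.sq_sqrt (div_pos hm0 hn0).le
  set PP : Matrix β α ℝ := r • P' with hPP
  set TT : Matrix β α ℝ := r⁻¹ • Q'ᵀ with hTT
  have hprod : PP * TTᵀ = P' * Q' := by
    rw [hPP, hTT, transpose_smul, transpose_transpose, Matrix.smul_mul, Matrix.mul_smul, smul_smul,
      mul_inv_cancel₀ hr0.ne', one_smul]
  have hT2' : trace (PP * TTᵀ * (PP * TTᵀ)) = -1 := by rw [hprod, hT2]
  have hnormP : trace (P' * P'ᵀ) = ∑ b, (1 / ((univ.filter (p b)).card : ℝ) - 1 / m) := by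
    rw [← rowMat_centred p hp0]
    simp only [trace, Matrix.diag, mul_apply, transpose_apply, hP', Matrix.sub_apply, vecMulVec_apply,
      Pi.one_apply, one_mul, ← sq]
    rfl
  have hnormQ : trace (Q' * Q'ᵀ) = ∑ a, (1 / ((univ.filter (q a)).card : ℝ) - 1 / n) := by
    rw [← rowMat_centred q hq0]
    simp only [trace, Matrix.diag, mul_apply, transpose_apply, hQ', Matrix.sub_apply, vecMulVec_apply,
      Pi.one_apply, one_mul, ← sq]
    rfl
  have hPle : ∀ b, 1 / ((univ.filter (p b)).card : ℝ) - 1 / m ≤ 2 / m := by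
    intro b
    have h1 : m ≤ 3 * ((univ.filter (p b)).card : ℝ) := by rw [hm]; exact_mod_cast hp b
    have h3 : (0 : ℝ) < ((univ.filter (p b)).card : ℝ) := by exact_mod_cast hp0 b
    have : 1 / ((univ.filter (p b)).card : ℝ) ≤ 3 / m := by
      rw [div_le_div_iff₀ h3 hm0]; linarith
    have e : 3 / m = 2 / m + 1 / m := by ring
    linarith
  have hQle : ∀ b, 1 / ((univ.filter (q b)).card : ℝ) - 1 / n ≤ 2 / n := by
    intro b
    have h1 : n ≤ 3 * ((univ.filter (q b)).card : ℝ) := by rw [hn]; exact_mod_cast hq b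
    have h3 : (0 : ℝ) < ((univ.filter (q b)).card : ℝ) := by exact_mod_cast hq0 b
    have : 1 / ((univ.filter (q b)).card : ℝ) ≤ 3 / n := by
      rw [div_le_div_iff₀ h3 hn0]; linarith
    have e : 3 / n = 2 / n + 1 / n := by ring
    linarith
  have hF : trace ((PP + TT) * (PP + TT)ᵀ) =
      m / n * trace (P' * P'ᵀ) - 2 + n / m * trace (Q' * Q'ᵀ) := by
    have e1 : trace (PP * PPᵀ) = m / n * trace (P' * P'ᵀ) := by
      rw [hPP, transpose_smul, Matrix.smul_mul, Matrix.mul_smul, smul_smul, trace_smul, ← sq, hr2,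
        smul_eq_mul]
    have e2 : trace (TT * TTᵀ) = n / m * trace (Q' * Q'ᵀ) := by
      rw [hTT, transpose_smul, Matrix.smul_mul, Matrix.mul_smul, smul_smul, trace_smul, ← sq, inv_pow,
        hr2, smul_eq_mul, transpose_transpose, trace_mul_comm, inv_div]
    have e3 : trace (PP * TTᵀ) = -1 := by rw [hprod, hT1]
    have e4 : trace (TT * PPᵀ) = -1 := by
      rw [← trace_transpose, transpose_mul, transpose_transpose, e3]
    rw [transpose_add, Matrix.add_mul, Matrix.mul_add, Matrix.mul_add, trace_add, trace_add,
      trace_add, e1, e2, e3, e4]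
    ring
  have hsumP : ∑ _b : β, 2 / m = 2 * n / m := by
    rw [Finset.sum_const, Finset.card_univ, nsmul_eq_mul, ← hn]; ring
  have hsumQ : ∑ _a : α, 2 / n = 2 * m / n := by
    rw [Finset.sum_const, Finset.card_univ, nsmul_eq_mul, ← hm]; ring
  have hle1 : trace (P' * P'ᵀ) ≤ 2 * n / m := by
    rw [hnormP, ← hsumP]; exact Finset.sum_le_sum fun b _ => hPle b
  have hle2 : trace (Q' * Q'ᵀ) ≤ 2 * m / n := by
    rw [hnormQ, ← hsumQ]; exact Finset.sum_le_sum fun b _ => hQle b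
  have hle1' : m / n * trace (P' * P'ᵀ) ≤ 2 := by
    calc _ ≤ m / n * (2 * n / m) := mul_le_mul_of_nonneg_left hle1 (by positivity)
      _ = 2 := by field_simp
  have hle2' : n / m * trace (Q' * Q'ᵀ) ≤ 2 := by
    calc _ ≤ n / m * (2 * m / n) := mul_le_mul_of_nonneg_left hle2 (by positivity)
      _ = 2 := by field_simp
  have hkey := key_ineq PP TT
  rw [hT2'] at hkey
  have hF0 : 0 ≤ trace ((PP + TT) * (PP + TT)ᵀ) := by
    simp only [trace, Matrix.diag, mul_apply, transpose_apply]
    exact Finset.sum_nonneg fun b _ => Finset.sum_nonneg fun a _ => mul_self_nonneg _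
  have hF2 : 2 ≤ trace ((PP + TT) * (PP + TT)ᵀ) := by nlinarith
  have hFeq : trace ((PP + TT) * (PP + TT)ᵀ) = 2 := by linarith
  have heq1 : trace (P' * P'ᵀ) = 2 * n / m := by
    have : m / n * trace (P' * P'ᵀ) = 2 := by linarith
    field_simp at this ⊢; linarith
  have heq2 : trace (Q' * Q'ᵀ) = 2 * m / n := by
    have : n / m * trace (Q' * Q'ᵀ) = 2 := by linarith
    field_simp at this ⊢; linarith
  have hdp : ∀ b, 1 / ((univ.filter (p b)).card : ℝ) = 3 / m := by
    rw [hnormP, ← hsumP] at heq1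
    intro b
    have := (Finset.sum_eq_sum_iff_of_le (fun b _ => hPle b)).1 heq1 b (mem_univ b)
    have e : 3 / m = 2 / m + 1 / m := by ring
    linarith
  have hdq : ∀ b, 1 / ((univ.filter (q b)).card : ℝ) = 3 / n := by
    rw [hnormQ, ← hsumQ] at heq2
    intro b
    have := (Finset.sum_eq_sum_iff_of_le (fun b _ => hQle b)).1 heq2 b (mem_univ b)
    have e : 3 / n = 2 / n + 1 / n := by ring
    linarith
  have hgrad := key_eq PP TT hFeq hT2'
  have hgr : ∀ a b, m * P b a + n * Q a b + n * (Q * P * Q) a b =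
      2 + n * ((fun _ => 1 / n) ᵥ* (P * Q)) b := by
    intro a b
    have h := congrFun (congrFun hgrad b) a
    have e : TT * PPᵀ * TT = r⁻¹ • (Q * P * Q - vecMulVec 1 ((fun _ => 1 / n) ᵥ* (P * Q)))ᵀ := by
      have e1 : TT * PPᵀ = (P' * Q')ᵀ := by
        rw [← hprod, transpose_mul, transpose_transpose]
      rw [e1, hTT, Matrix.mul_smul, ← transpose_mul, hX, Matrix.mul_sub, mul_vecMulVec, hQ'1,
        zero_vecMulVec, sub_zero, hQ', Matrix.sub_mul, vecMulVec_mul, Matrix.mul_assoc]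
    rw [e] at h
    simp only [hPP, hTT, hP', hQ', Matrix.add_apply, Matrix.smul_apply, Matrix.sub_apply, transpose_apply,
      vecMulVec_apply, Pi.one_apply, one_mul, smul_eq_mul, Matrix.zero_apply] at h
    have h' : r ^ 2 * (P b a - 1 / m) + (Q a b - 1 / n) +
        ((Q * P * Q) a b - ((fun _ => 1 / n) ᵥ* (P * Q)) b) = 0 := by
      have := congrArg (fun t => r * t) h
      simp only [mul_zero] at this
      rw [← this]
      field_simp
    rw [hr2] at h'
    have := congrArg (fun t => n * t) h'
    simp only [mul_zero] at this
    have e2 : n * (m / n * (P b a - 1 / m) + (Q a b - 1 / n) +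
        ((Q * P * Q) a b - ((fun _ => 1 / n) ᵥ* (P * Q)) b)) =
      m * P b a + n * Q a b + n * (Q * P * Q) a b - 2 - n * ((fun _ => 1 / n) ᵥ* (P * Q)) b := by
      field_simp; ring
    linarith
  have hPv : ∀ b a, p b a → m * P b a = 3 := by
    intro b a h; rw [hP, rowMat_apply, if_pos h, hdp]; field_simp
  have hQv : ∀ b a, q b a → n * Q b a = 3 := by
    intro b a h; rw [hQ, rowMat_apply, if_pos h, hdq]; field_simp
  have hQPQ0 : ∀ a b, p b a → (Q * P * Q) a b = 0 := by
    intro a b h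
    rw [mul_apply]
    refine Finset.sum_eq_zero fun y _ => ?_
    rw [mul_apply, Finset.sum_mul]
    refine Finset.sum_eq_zero fun x _ => ?_
    by_contra h'
    have h1 := left_ne_zero_of_mul h'
    exact h4 b a x y h (hQne _ _ (left_ne_zero_of_mul h1)) (hPne _ _ (right_ne_zero_of_mul h1))
      (hQne _ _ (right_ne_zero_of_mul h'))
  have hgr3 : ∀ a b, m * P b a + n * Q a b + n * (Q * P * Q) a b = 3 := by
    intro a b
    obtain ⟨a', ha'⟩ := Finset.card_pos.1 (hp0 b)
    have ha' : p b a' := by simpa using ha'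
    have h1 := hgr a' b
    have hQ0 : Q a' b = 0 := by
      by_contra h; exact h2 b a' ha' (hQne _ _ h)
    rw [hPv b a' ha', hQ0, hQPQ0 a' b ha'] at h1
    rw [hgr a b]; linarith
  have hQPQ1 : (Q * P * Q) *ᵥ 1 = 1 := by
    rw [Matrix.mul_assoc, ← mulVec_mulVec, hPQ1, hQ1]
  refine ⟨?_, ?_, ?_, ?_⟩
  · intro b
    have h := hdp b
    have h3 : (0 : ℝ) < ((univ.filter (p b)).card : ℝ) := by exact_mod_cast hp0 b
    field_simp at h
    have : (3 * ((univ.filter (p b)).card : ℝ)) = m := by linarith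
    rw [hm] at this
    exact_mod_cast this
  · intro b
    have h := hdq b
    have h3 : (0 : ℝ) < ((univ.filter (q b)).card : ℝ) := by exact_mod_cast hq0 b
    field_simp at h
    have : (3 * ((univ.filter (q b)).card : ℝ)) = n := by linarith
    rw [hn] at this
    exact_mod_cast this
  · intro a
    have h1 : ∑ b, (m * P b a + n * Q a b + n * (Q * P * Q) a b) = ∑ _b : β, (3 : ℝ) :=
      Finset.sum_congr rfl fun b _ => hgr3 a b
    have e1 : ∑ b, m * P b a = 3 * ((univ.filter (fun b => p b a)).card : ℝ) := by
      have : ∀ b, m * P b a = if p b a then 3 else 0 := by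
        intro b
        split_ifs with h
        · exact hPv b a h
        · by_contra h'; exact h (hPne _ _ (right_ne_zero_of_mul h'))
      simp only [this]
      rw [← Finset.sum_filter, Finset.sum_const, nsmul_eq_mul]; ring
    have e2 : ∑ b, Q a b = 1 := rowMat_sum q a (hq0 a)
    have e3 : ∑ b, (Q * P * Q) a b = 1 := by
      have := congrFun hQPQ1 a
      simpa [mulVec, dotProduct] using this
    rw [Finset.sum_add_distrib, Finset.sum_add_distrib, e1, ← Finset.mul_sum, ← Finset.mul_sum, e2,
      e3, Finset.sum_const, Finset.card_univ, nsmul_eq_mul, ← hn] at h1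
    have : 3 * ((univ.filter (fun b => p b a)).card : ℝ) = n := by linarith
    rw [hn] at this
    exact_mod_cast this
  · intro a b x y hax hxy hyb hab
    have h1 := hgr3 a b
    rw [hQv a b hab] at h1
    have h0 : 0 ≤ m * P b a := mul_nonneg hm0.le (hPn _ _)
    have hQPn : ∀ a' x', 0 ≤ (Q * P) a' x' := fun a' x' => by
      rw [mul_apply]
      exact Finset.sum_nonneg fun i _ => mul_nonneg (hQn _ _) (hPn _ _)
    have hQpos : ∀ a b, q a b → 0 < Q a b := fun a b h => by
      refine lt_of_le_of_ne (hQn a b) fun h' => ?_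
      have := hQv a b h
      rw [← h', mul_zero] at this
      norm_num at this
    have hPpos : ∀ a b, p a b → 0 < P a b := fun a b h => by
      refine lt_of_le_of_ne (hPn a b) fun h' => ?_
      have := hPv a b h
      rw [← h', mul_zero] at this
      norm_num at this
    have h5 : 0 < (Q * P) a y := by
      rw [mul_apply]
      refine lt_of_lt_of_le (mul_pos (hQpos a x hax) (hPpos x y hxy)) ?_
      exact Finset.single_le_sum (f := fun x => Q a x * P x y)
        (fun i _ => mul_nonneg (hQn _ _) (hPn _ _)) (mem_univ x)
    have h6 : 0 < (Q * P * Q) a b := by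
      rw [mul_apply]
      refine lt_of_lt_of_le (mul_pos h5 (hQpos y b hyb)) ?_
      exact Finset.single_le_sum (f := fun y => (Q * P) a y * Q y b)
        (fun i _ => mul_nonneg (hQPn _ _) (hQn _ _)) (mem_univ y)
    have := mul_pos hn0 h6
    linarith

lemma card_filter_sub {V : Type*} [Fintype V] [DecidableEq V] (S : Finset V) (r : V → Prop)
    [DecidablePred r] (h : ∀ w, r w → w ∈ S) :
    (univ.filter (fun x : S => r x)).card = (univ.filter r).card := by
  refine Finset.card_bij (fun x _ => (x : V)) ?_ ?_ ?_
  · intro x hx; simpa using hx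
  · intro x _ y _ hxy; exact Subtype.ext hxy
  · intro w hw
    have hw : r w := by simpa using hw
    exact ⟨⟨w, h w hw⟩, by simpa using hw, rfl⟩

theorem directed_C4_or_extremal {V : Type*} [Fintype V] [DecidableEq V]
    (A B : Finset V) (E : V → V → Prop) [DecidableRel E]
    (m n : ℕ) (hAcard : A.card = m) (hBcard : B.card = n)
    (hm : 2 ≤ m) (hn : 2 ≤ n)
    (hdisj : Disjoint A B) (hcover : A ∪ B = Finset.univ)
    (hbip : ∀ u v, E u v → (u ∈ A ∧ v ∈ B) ∨ (u ∈ B ∧ v ∈ A))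
    (horient : ∀ u v, E u v → ¬ E v u)
    (hdegA : ∀ u ∈ A, n ≤ 3 * OutDeg E u)
    (hdegB : ∀ v ∈ B, m ≤ 3 * OutDeg E v)
    (hnotextremal : ¬ IsDStar A B E) :
    HasDirC4 E := by
  by_contra hC4
  apply hnotextremal
  have hAB : ∀ x, x ∈ A → x ∈ B → False := fun x h1 h2 => Finset.disjoint_left.1 hdisj h1 h2
  have hEA : ∀ u v, u ∈ A → E u v → v ∈ B := by
    intro u v hu h
    rcases hbip u v h with h | h
    · exact h.2
    · exact (hAB u hu h.1).elim
  have hEB : ∀ u v, u ∈ B → E u v → v ∈ A := by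
    intro u v hu h
    rcases hbip u v h with h | h
    · exact (hAB u h.1 hu).elim
    · exact h.2
  have hEA' : ∀ u v, u ∈ A → E v u → v ∈ B := by
    intro u v hu h
    rcases hbip v u h with h | h
    · exact (hAB u hu h.2).elim
    · exact h.1
  have hEB' : ∀ u v, u ∈ B → E v u → v ∈ A := by
    intro u v hu h
    rcases hbip v u h with h | h
    · exact h.1
    · exact (hAB u h.2 hu).elim
  have hne : ∀ u v, E u v → u ≠ v := by
    rintro u v h rfl; exact horient u u h h
  have h4 : ∀ a b c d, E a b → E b c → E c d → ¬ E d a := by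
    intro a b c d h1 h2 h3 h5
    refine hC4 ⟨a, b, c, d, hne _ _ h1, ?_, (hne _ _ h5).symm, hne _ _ h2, ?_, hne _ _ h3, h1, h2,
      h3, h5⟩
    · rintro rfl; exact horient _ _ h1 h2
    · rintro rfl; exact horient _ _ h2 h3
  have hcA : Fintype.card A = m := by rw [Fintype.card_coe, hAcard]
  have hcB : Fintype.card B = n := by rw [Fintype.card_coe, hBcard]
  have : Nontrivial A := Fintype.one_lt_card_iff_nontrivial.1 (by omega)
  have : Nontrivial B := Fintype.one_lt_card_iff_nontrivial.1 (by omega)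
  have hoA' : ∀ a : A, (univ.filter (fun b : B => E a b)).card = OutDeg E a := fun a =>
    card_filter_sub B (fun b => E a b) (fun w hw => hEA a w a.2 hw)
  have hoB' : ∀ a : B, (univ.filter (fun b : A => E a b)).card = OutDeg E a := fun a =>
    card_filter_sub A (fun b => E a b) (fun w hw => hEB a w a.2 hw)
  have hiA' : ∀ a : A, (univ.filter (fun b : B => E b a)).card = InDeg E a := fun a =>
    card_filter_sub B (fun b => E b a) (fun w hw => hEA' a w a.2 hw)
  have hiB' : ∀ a : B, (univ.filter (fun b : A => E b a)).card = InDeg E a := fun a =>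
    card_filter_sub A (fun b => E b a) (fun w hw => hEB' a w a.2 hw)
  obtain ⟨c1, c2, c3, -⟩ := core (β := B) (α := A) (fun b a => E b a) (fun a b => E a b)
    (fun b a h => horient _ _ h) (fun b a b' a' h1 h2 h3 => h4 _ _ _ _ h1 h2 h3)
    (fun b => by rw [hcA, hoB']; exact hdegB b b.2)
    (fun a => by rw [hcB, hoA']; exact hdegA a a.2)
  obtain ⟨-, -, c3', c4'⟩ := core (β := A) (α := B) (fun b a => E b a) (fun a b => E a b)
    (fun b a h => horient _ _ h) (fun b a b' a' h1 h2 h3 => h4 _ _ _ _ h1 h2 h3)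
    (fun a => by rw [hcB, hoA']; exact hdegA a a.2)
    (fun b => by rw [hcA, hoB']; exact hdegB b b.2)
  set O : V → Finset V := fun u => univ.filter (fun w => E u w) with hO
  set I : V → Finset V := fun u => univ.filter (fun w => E w u) with hI
  have mO : ∀ u w, w ∈ O u ↔ E u w := by intro u w; simp [hO]
  have mI : ∀ u w, w ∈ I u ↔ E w u := by intro u w; simp [hI]
  have oA : ∀ a ∈ A, 3 * (O a).card = n := fun a ha => by
    have := c2 ⟨a, ha⟩; rw [hcB, hoA'] at this; exact this
  have oB : ∀ a ∈ B, 3 * (O a).card = m := fun a ha => by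
    have := c1 ⟨a, ha⟩; rw [hcA, hoB'] at this; exact this
  have iA : ∀ a ∈ A, 3 * (I a).card = n := fun a ha => by
    have := c3 ⟨a, ha⟩; rw [hcB, hiA'] at this; exact this
  have iB : ∀ a ∈ B, 3 * (I a).card = m := fun a ha => by
    have := c3' ⟨a, ha⟩; rw [hcA, hiB'] at this; exact this
  have walk : ∀ v ∈ B, ∀ x y a, E v x → E x y → E y a → ¬ E v a := by
    intro v hv x y a h1 h2 h3
    have hx := hEB v x hv h1
    have hy := hEA x y hx h2
    have ha := hEB y a hy h3
    exact c4' ⟨v, hv⟩ ⟨a, ha⟩ ⟨x, hx⟩ ⟨y, hy⟩ h1 h2 h3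
  have OsubA : ∀ v ∈ B, O v ⊆ A := fun v hv w hw => hEB v w hv ((mO _ _).1 hw)
  have IsubA : ∀ v ∈ B, I v ⊆ A := fun v hv w hw => hEB' v w hv ((mI _ _).1 hw)
  have OIdisj : ∀ v, Disjoint (O v) (I v) := fun v =>
    Finset.disjoint_left.2 fun w h1 h2 => horient _ _ ((mO _ _).1 h1) ((mI _ _).1 h2)
  set N : V → Finset V := fun v => A \ (O v ∪ I v) with hN
  have Ncard : ∀ v ∈ B, 3 * (N v).card = m := by
    intro v hv
    have h1 : (N v).card + (O v ∪ I v).card = A.card :=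
      Finset.card_sdiff_add_card_eq_card (Finset.union_subset (OsubA v hv) (IsubA v hv))
    rw [Finset.card_union_of_disjoint (OIdisj v)] at h1
    have := oB v hv
    have := iB v hv
    omega
  have s1 : ∀ v ∈ B, ∀ x y, E v x → E x y → O y = N v := by
    intro v hv x y h1 h2
    have hx := hEB v x hv h1
    have hy := hEA x y hx h2
    apply Finset.eq_of_subset_of_card_le
    · intro w hw
      have hw := (mO _ _).1 hw
      simp only [hN, Finset.mem_sdiff, Finset.mem_union, mO, mI, not_or]
      exact ⟨hEB y w hy hw, walk v hv x y w h1 h2 hw, h4 v x y w h1 h2 hw⟩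
    · have := Ncard v hv; have := oB y hy; omega
  have s2 : ∀ v ∈ B, ∀ x y, E v x → E x y → I y = O v := by
    intro v hv x y h1 h2
    have hx := hEB v x hv h1
    have hy := hEA x y hx h2
    obtain ⟨c, hc⟩ : (N v).Nonempty := by
      rw [← Finset.card_pos]; have := Ncard v hv; omega
    have hcA : c ∈ A := (Finset.mem_sdiff.1 hc).1
    have h5 : ∀ x', E v x' → O x' = I c := by
      intro x' hx'
      have hx'A := hEB v x' hv hx'
      apply Finset.eq_of_subset_of_card_le
      · intro w hw
        have hw := (mO _ _).1 hw
        rw [mI, ← mO, s1 v hv x' w hx' hw]; exact hc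
      · have := oA x' hx'A; have := iA c hcA; omega
    symm
    apply Finset.eq_of_subset_of_card_le
    · intro x' hx'
      have hx' := (mO _ _).1 hx'
      rw [mI, ← mO, h5 x' hx', ← h5 x h1, mO]; exact h2
    · have := oB v hv; have := iB y hy; omega
  have s3 : ∀ v ∈ B, ∀ x y, E v x → E x y → N y = I v := by
    intro v hv x y h1 h2
    have hx := hEB v x hv h1
    have hy := hEA x y hx h2
    symm
    apply Finset.eq_of_subset_of_card_le
    · intro w hw
      have hwA := IsubA v hv hw
      have hw' := (mI _ _).1 hw
      simp only [hN, Finset.mem_sdiff, Finset.mem_union, not_or]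
      rw [s1 v hv x y h1 h2, s2 v hv x y h1 h2]
      refine ⟨hwA, ?_, fun h => horient _ _ hw' ((mO _ _).1 h)⟩
      simp only [hN, Finset.mem_sdiff, Finset.mem_union, not_and, not_not]
      exact fun _ => Or.inr hw
    · have := Ncard y hy; have := iB v hv; omega
  have exO : ∀ v, ∃ w, E v w := by
    intro v
    have hv : v ∈ A ∪ B := by rw [hcover]; exact mem_univ v
    have : 0 < (O v).card := by
      rcases Finset.mem_union.1 hv with h | h
      · have := oA v h; omega
      · have := oB v h; omega
    obtain ⟨w, hw⟩ := Finset.card_pos.1 this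
    exact ⟨w, (mO _ _).1 hw⟩
  obtain ⟨v, hv⟩ : B.Nonempty := by rw [← Finset.card_pos]; omega
  obtain ⟨x0, hx0⟩ := exO v
  obtain ⟨y, hy⟩ := exO x0
  obtain ⟨x1, hx1⟩ := exO y
  obtain ⟨z, hz⟩ := exO x1
  obtain ⟨x2, hx2⟩ := exO z
  have x0A := hEB v x0 hv hx0
  have yB := hEA x0 y x0A hy
  have x1A := hEB y x1 yB hx1
  have zB := hEA x1 z x1A hz
  have x2A := hEB z x2 zB hx2
  have oy : O y = N v := s1 v hv x0 y hx0 hy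
  have oz : O z = I v := by rw [s1 y yB x1 z hx1 hz, s3 v hv x0 y hx0 hy]
  have Nz : N z = O v := by rw [s3 y yB x1 z hx1 hz, s2 v hv x0 y hx0 hy]
  have b1o : ∀ w, E x0 w → O w = N v := fun w hw => s1 v hv x0 w hx0 hw
  have b1i : ∀ w, E x0 w → I w = O v := fun w hw => s2 v hv x0 w hx0 hw
  have b2o : ∀ w, E x1 w → O w = I v := fun w hw => by
    rw [s1 y yB x1 w hx1 hw, s3 v hv x0 y hx0 hy]
  have b2i : ∀ w, E x1 w → I w = N v := fun w hw => by rw [s2 y yB x1 w hx1 hw, oy]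
  have b0o : ∀ w, E x2 w → O w = O v := fun w hw => by rw [s1 z zB x2 w hx2 hw, Nz]
  have b0i : ∀ w, E x2 w → I w = I v := fun w hw => by rw [s2 z zB x2 w hx2 hw, oz]
  have d01 : Disjoint (I v) (O v) := (OIdisj v).symm
  have d02 : Disjoint (I v) (N v) :=
    Finset.disjoint_left.2 fun w h1 h2 => (Finset.mem_sdiff.1 h2).2 (Finset.mem_union_right _ h1)
  have d12 : Disjoint (O v) (N v) :=
    Finset.disjoint_left.2 fun w h1 h2 => (Finset.mem_sdiff.1 h2).2 (Finset.mem_union_left _ h1)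
  have hdis : ∀ w, ∀ S T : Finset V, Disjoint S T → O w = S → O w = T → False := by
    intro w S T h h1 h2
    obtain ⟨t, ht⟩ := exO w
    have ht := (mO _ _).2 ht
    exact Finset.disjoint_left.1 h (h1 ▸ ht) (h2 ▸ ht)
  have e01 : Disjoint (O x2) (O x0) := Finset.disjoint_left.2 fun w h1 h2 =>
    hdis w _ _ d12 (b0o w ((mO _ _).1 h1)) (b1o w ((mO _ _).1 h2))
  have e02 : Disjoint (O x2) (O x1) := Finset.disjoint_left.2 fun w h1 h2 =>
    hdis w _ _ d01.symm (b0o w ((mO _ _).1 h1)) (b2o w ((mO _ _).1 h2))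
  have e12 : Disjoint (O x0) (O x1) := Finset.disjoint_left.2 fun w h1 h2 =>
    hdis w _ _ d02.symm (b1o w ((mO _ _).1 h1)) (b2o w ((mO _ _).1 h2))
  have uA : I v ∪ O v ∪ N v = A := by
    rw [hN, Finset.union_comm (I v)]
    exact Finset.union_sdiff_of_subset (Finset.union_subset (OsubA v hv) (IsubA v hv))
  have OsubB : ∀ a ∈ A, O a ⊆ B := fun v hv w hw => hEA v w hv ((mO _ _).1 hw)
  have uB : O x2 ∪ O x0 ∪ O x1 = B := by
    apply Finset.eq_of_subset_of_card_le
    · exact Finset.union_subset (Finset.union_subset (OsubB _ x2A) (OsubB _ x0A)) (OsubB _ x1A)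
    · rw [Finset.card_union_of_disjoint (Finset.disjoint_union_left.2 ⟨e02, e12⟩),
        Finset.card_union_of_disjoint e01]
      have := oA _ x0A; have := oA _ x1A; have := oA _ x2A
      omega
  have hcov : ∀ w ∈ B, E x2 w ∨ E x0 w ∨ E x1 w := by
    intro w hw
    rw [← uB] at hw
    simp only [Finset.mem_union, mO] at hw
    tauto
  have hfin : ∀ u w, E u w ↔ ((u ∈ I v ∧ E x2 w) ∨ (u ∈ O v ∧ E x0 w) ∨ (u ∈ N v ∧ E x1 w)) ∨
      ((E x2 u ∧ w ∈ O v) ∨ (E x0 u ∧ w ∈ N v) ∨ (E x1 u ∧ w ∈ I v)) := by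
    intro u w
    constructor
    · intro h
      rcases hbip u w h with ⟨_, hw⟩ | ⟨hu, _⟩
      · left
        have h' := (mI _ _).2 h
        rcases hcov w hw with h1 | h1 | h1
        · exact Or.inl ⟨b0i w h1 ▸ h', h1⟩
        · exact Or.inr (Or.inl ⟨b1i w h1 ▸ h', h1⟩)
        · exact Or.inr (Or.inr ⟨b2i w h1 ▸ h', h1⟩)
      · right
        have h' := (mO _ _).2 h
        rcases hcov u hu with h1 | h1 | h1
        · exact Or.inl ⟨h1, b0o u h1 ▸ h'⟩
        · exact Or.inr (Or.inl ⟨h1, b1o u h1 ▸ h'⟩)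
        · exact Or.inr (Or.inr ⟨h1, b2o u h1 ▸ h'⟩)
    · rintro ((⟨h, h1⟩ | ⟨h, h1⟩ | ⟨h, h1⟩) | (⟨h1, h⟩ | ⟨h1, h⟩ | ⟨h1, h⟩))
      · rw [← b0i w h1, mI] at h; exact h
      · rw [← b1i w h1, mI] at h; exact h
      · rw [← b2i w h1, mI] at h; exact h
      · rw [← b0o u h1, mO] at h; exact h
      · rw [← b1o u h1, mO] at h; exact h
      · rw [← b2o u h1, mO] at h; exact h
  have hall : ∀ Q : ZMod 3 → Prop, Q 0 → Q 1 → Q 2 → ∀ i, Q i := by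
    intro Q h0 h1 h2 i
    change Fin 3 at i
    fin_cases i
    · exact h0
    · exact h1
    · exact h2
  obtain ⟨M, hM0, hM1, hM2⟩ : ∃ M : ZMod 3 → Finset V, M 0 = I v ∧ M 1 = O v ∧ M 2 = N v :=
    ⟨(![I v, O v, N v] : Fin 3 → Finset V), rfl, rfl, rfl⟩
  obtain ⟨K, hK0, hK1, hK2⟩ : ∃ M : ZMod 3 → Finset V, M 0 = O x2 ∧ M 1 = O x0 ∧ M 2 = O x1 :=
    ⟨(![O x2, O x0, O x1] : Fin 3 → Finset V), rfl, rfl, rfl⟩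
  have t1 : (0 : ZMod 3) + 1 = 1 := by decide
  have t2 : (1 : ZMod 3) + 1 = 2 := by decide
  have t3 : (2 : ZMod 3) + 1 = 0 := by decide
  refine ⟨M, K, ?_, ?_, ?_, ?_, ?_, ?_, ?_⟩
  · refine hall _ (hall _ ?_ ?_ ?_) (hall _ ?_ ?_ ?_) (hall _ ?_ ?_ ?_) <;> intro hij <;>
      first
      | exact absurd rfl hij
      | (simp only [hM0, hM1, hM2]; first | assumption | (apply Disjoint.symm; assumption))
  · refine hall _ (hall _ ?_ ?_ ?_) (hall _ ?_ ?_ ?_) (hall _ ?_ ?_ ?_) <;> intro hij <;>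
      first
      | exact absurd rfl hij
      | (simp only [hK0, hK1, hK2]; first | assumption | (apply Disjoint.symm; assumption))
  · rw [hM0, hM1, hM2, uA]
  · rw [hK0, hK1, hK2, uB]
  · rw [hAcard]
    refine hall _ ?_ ?_ ?_
    · rw [hM0]; exact iB v hv
    · rw [hM1]; exact oB v hv
    · rw [hM2]; exact Ncard v hv
  · rw [hBcard]
    refine hall _ ?_ ?_ ?_
    · rw [hK0]; exact oA _ x2A
    · rw [hK1]; exact oA _ x0A
    · rw [hK2]; exact oA _ x1A
  · intro u w
    rw [hfin u w]
    constructor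
    · rintro ((⟨h, h1⟩ | ⟨h, h1⟩ | ⟨h, h1⟩) | (⟨h1, h⟩ | ⟨h1, h⟩ | ⟨h1, h⟩))
      · exact ⟨0, Or.inl ⟨by rw [hM0]; exact h, by rw [hK0, mO]; exact h1⟩⟩
      · exact ⟨1, Or.inl ⟨by rw [hM1]; exact h, by rw [hK1, mO]; exact h1⟩⟩
      · exact ⟨2, Or.inl ⟨by rw [hM2]; exact h, by rw [hK2, mO]; exact h1⟩⟩
      · exact ⟨0, Or.inr ⟨by rw [hK0, mO]; exact h1, by rw [t1, hM1]; exact h⟩⟩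
      · exact ⟨1, Or.inr ⟨by rw [hK1, mO]; exact h1, by rw [t2, hM2]; exact h⟩⟩
      · exact ⟨2, Or.inr ⟨by rw [hK2, mO]; exact h1, by rw [t3, hM0]; exact h⟩⟩
    · rintro ⟨i, hi⟩
      revert i
      refine hall _ ?_ ?_ ?_
      · rw [t1, hM0, hM1, hK0]
        rintro (⟨h, h'⟩ | ⟨h, h'⟩)
        · exact Or.inl (Or.inl ⟨h, (mO _ _).1 h'⟩)
        · exact Or.inr (Or.inl ⟨(mO _ _).1 h, h'⟩)
      · rw [t2, hM1, hM2, hK1]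
        rintro (⟨h, h'⟩ | ⟨h, h'⟩)
        · exact Or.inl (Or.inr (Or.inl ⟨h, (mO _ _).1 h'⟩))
        · exact Or.inr (Or.inr (Or.inl ⟨(mO _ _).1 h, h'⟩))
      · rw [t3, hM2, hM0, hK2]
        rintro (⟨h, h'⟩ | ⟨h, h'⟩)
        · exact Or.inl (Or.inr (Or.inr ⟨h, (mO _ _).1 h'⟩))
        · exact Or.inr (Or.inr (Or.inr ⟨(mO _ _).1 h, h'⟩))
end

section
/- Let D be an oriented bipartite graph with parts A (|A| = 3m1) and B (|B| = 3n1), m1, n1 ≥ 1, in which every vertex of A has out-degree exactly n1 and every vertex of B has out-degree exactly m1. If D contains no directed C4, then D is isomorphic to D*(3m1, 3n1), where D*(m,n) is the digraph obtained by partitioning A and B each into three equal blocks A1, A2, A3 and B1, B2, B3 and including all arcs from Ai to Bi and from Bi to A(i+1 mod 3). -/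
open Finset

/-- Bundled working hypotheses. -/
structure Hyp {V : Type*} [Fintype V] [DecidableEq V] (A B : Finset V) (E : V → V → Prop)
    [DecidableRel E] (m n : ℕ) : Prop where
  cA : A.card = 3 * m
  cB : B.card = 3 * n
  disj : Disjoint A B
  bip : ∀ u v, E u v → (u ∈ A ∧ v ∈ B) ∨ (u ∈ B ∧ v ∈ A)
  ori : ∀ u v, E u v → ¬ E v u
  oA : ∀ u ∈ A, (univ.filter fun w => E u w).card = n
  oB : ∀ u ∈ B, (univ.filter fun w => E u w).card = m
  c4 : ∀ a b c d, E a b → E b c → E c d → E d a → False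

section
variable {V : Type*} [Fintype V] [DecidableEq V] {A B : Finset V} {E : V → V → Prop}
    [DecidableRel E] {m n : ℕ}

theorem Hyp.swap (h : Hyp A B E m n) : Hyp B A E n m :=
  ⟨h.cB, h.cA, h.disj.symm, fun u v e => (h.bip u v e).symm, h.ori, h.oB, h.oA, h.c4⟩

theorem Hyp.AB (h : Hyp A B E m n) {u v : V} (e : E u v) (hu : u ∈ A) : v ∈ B := by
  rcases h.bip u v e with h1 | h1
  · exact h1.2
  · exact absurd h1.1 (Finset.disjoint_left.1 h.disj hu)

theorem Hyp.BA' (h : Hyp A B E m n) {u v : V} (e : E u v) (hv : v ∈ B) : u ∈ A := by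
  rcases h.bip u v e with h1 | h1
  · exact h1.1
  · exact absurd hv (Finset.disjoint_left.1 h.disj h1.2)

def PM (E : V → V → Prop) [DecidableRel E] (a a' : V) : ℕ :=
  (univ.filter fun b => E a b ∧ E b a').card

def PP (E : V → V → Prop) [DecidableRel E] (a a' : V) : ℕ :=
  (univ.filter fun b => E a b ∧ E a' b).card

theorem PP_comm (a a' : V) : PP E a a' = PP E a' a := by
  unfold PP; congr 1; ext b; simp [and_comm]

theorem Hyp.PM_zero (h : Hyp A B E m n) {a b a' : V} (h1 : E a b) (h2 : E b a') :
    PM E a' a = 0 := by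
  unfold PM
  rw [Finset.card_eq_zero, Finset.filter_eq_empty_iff]
  rintro c - ⟨h3, h4⟩
  exact h.c4 _ _ _ _ h1 h2 h3 h4

theorem Hyp.PM_PP (h : Hyp A B E m n) (a a' : V) (ha : a ∈ A) : PM E a a' + PP E a a' ≤ n := by
  rw [← h.oA a ha]
  unfold PM PP
  rw [← Finset.card_union_of_disjoint]
  · apply Finset.card_le_card
    intro b; simp only [Finset.mem_union, Finset.mem_filter]; tauto
  · rw [Finset.disjoint_left]
    intro b; simp only [Finset.mem_filter]
    rintro ⟨-, -, h1⟩ ⟨-, -, h2⟩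
    exact h.ori _ _ h1 h2

theorem Hyp.pair_le (h : Hyp A B E m n) (a a' : V) (ha : a ∈ A) (ha' : a' ∈ A) :
    PM E a a' + PM E a' a + PP E a a' ≤ n := by
  have h1 := h.PM_PP a a' ha
  have h2 := h.PM_PP a' a ha'
  rw [PP_comm] at h2
  by_cases h0 : PM E a a' = 0
  · omega
  · unfold PM at h0
    rw [Finset.card_eq_zero, ← ne_eq, ← Finset.nonempty_iff_ne_empty] at h0
    obtain ⟨b, hb⟩ := h0
    simp only [Finset.mem_filter] at hb
    have := h.PM_zero hb.2.1 hb.2.2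
    omega

theorem Hyp.sum_PM (h : Hyp A B E m n) : ∑ a ∈ A, ∑ a' ∈ A, PM E a a' = 3 * m * n * m := by
  have key : ∀ a ∈ A, ∑ a' ∈ A, PM E a a' = n * m := by
    intro a ha
    calc ∑ a' ∈ A, PM E a a'
        = ∑ a' ∈ A, ∑ b ∈ univ.filter (fun b => E a b), if E b a' then 1 else 0 := by
          apply Finset.sum_congr rfl
          intro a' _
          rw [← Finset.card_filter, Finset.filter_filter]; rfl
      _ = ∑ b ∈ univ.filter (fun b => E a b), ∑ a' ∈ A, if E b a' then 1 else 0 :=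
          Finset.sum_comm
      _ = ∑ b ∈ univ.filter (fun b => E a b), m := by
          apply Finset.sum_congr rfl
          intro b hb
          have hb' : b ∈ B := h.AB (Finset.mem_filter.1 hb).2 ha
          rw [← Finset.card_filter, ← h.oB b hb']
          congr 1; ext x; simp only [Finset.mem_filter, Finset.mem_univ, true_and]
          exact ⟨fun k => k.2, fun k => ⟨h.swap.AB k hb', k⟩⟩
      _ = n * m := by rw [Finset.sum_const, h.oA a ha, smul_eq_mul]
  rw [Finset.sum_congr rfl key, Finset.sum_const, h.cA, smul_eq_mul]; ring

theorem Hyp.sum_in (h : Hyp A B E m n) :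
    ∑ b ∈ B, (univ.filter fun a => E a b).card = 3 * m * n := by
  calc ∑ b ∈ B, (univ.filter fun a => E a b).card
      = ∑ b ∈ B, ∑ a ∈ A, if E a b then 1 else 0 := by
        apply Finset.sum_congr rfl
        intro b hb
        rw [← Finset.card_filter]
        congr 1; ext x; simp only [Finset.mem_filter, Finset.mem_univ, true_and]
        exact ⟨fun k => ⟨h.BA' k hb, k⟩, fun k => k.2⟩
    _ = ∑ a ∈ A, ∑ b ∈ B, if E a b then 1 else 0 := Finset.sum_comm
    _ = ∑ a ∈ A, n := by
        apply Finset.sum_congr rfl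
        intro a ha
        rw [← Finset.card_filter, ← h.oA a ha]
        congr 1; ext x; simp only [Finset.mem_filter, Finset.mem_univ, true_and]
        exact ⟨fun k => k.2, fun k => ⟨h.AB k ha, k⟩⟩
    _ = _ := by rw [Finset.sum_const, h.cA, smul_eq_mul]

theorem Hyp.sum_PP (h : Hyp A B E m n) :
    ∑ a ∈ A, ∑ a' ∈ A, PP E a a' = ∑ b ∈ B, ((univ.filter fun a => E a b).card) ^ 2 := by
  have e1 : ∀ b ∈ B, (univ.filter fun a => E a b).card = ∑ a ∈ A, if E a b then 1 else 0 := by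
    intro b hb
    rw [← Finset.card_filter]
    congr 1; ext x; simp only [Finset.mem_filter, Finset.mem_univ, true_and]
    exact ⟨fun k => ⟨h.BA' k hb, k⟩, fun k => k.2⟩
  have e2 : ∀ a ∈ A, ∀ a' ∈ A, PP E a a' =
      ∑ b ∈ B, (if E a b then 1 else 0) * (if E a' b then 1 else 0) := by
    intro a ha a' _
    simp only [← ite_and, mul_ite, mul_one, mul_zero]
    rw [← Finset.card_filter]
    unfold PP
    congr 1; ext x; simp only [Finset.mem_filter, Finset.mem_univ, true_and]
    exact ⟨fun k => ⟨h.AB k.1 ha, k.2, k.1⟩, fun k => ⟨k.2.2, k.2.1⟩⟩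
  rw [Finset.sum_congr rfl fun a ha => Finset.sum_congr rfl (e2 a ha)]
  have e3 : ∀ b ∈ B, ((univ.filter fun a => E a b).card) ^ 2 =
      ∑ a ∈ A, ∑ a' ∈ A, (if E a b then 1 else 0) * (if E a' b then 1 else 0) := by
    intro b hb
    rw [e1 b hb, sq, Finset.sum_mul_sum]
  rw [Finset.sum_congr rfl e3, Finset.sum_comm (s := B)]
  apply Finset.sum_congr rfl
  intro a _
  exact Finset.sum_comm

theorem Hyp.tight (h : Hyp A B E m n) :
    (∀ a ∈ A, ∀ a' ∈ A, PM E a a' + PM E a' a + PP E a a' = n) ∧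
    (∀ b ∈ B, (univ.filter fun a => E a b).card = m) := by
  have s1 := h.sum_PM
  have s1' : ∑ a ∈ A, ∑ a' ∈ A, PM E a' a = 3 * m * n * m := by
    rw [Finset.sum_comm]; exact s1
  have s2 := h.sum_PP
  have s3 := h.sum_in
  have tot : ∑ a ∈ A, ∑ a' ∈ A, (PM E a a' + PM E a' a + PP E a a') =
      3 * m * n * m + 3 * m * n * m + ∑ b ∈ B, ((univ.filter fun a => E a b).card) ^ 2 := by
    simp only [Finset.sum_add_distrib]; rw [s1, s1', s2]
  have cst : ∑ a ∈ A, ∑ a' ∈ A, n = 9 * m * m * n := by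
    simp only [Finset.sum_const, h.cA, smul_eq_mul]; ring
  have le : ∑ a ∈ A, ∑ a' ∈ A, (PM E a a' + PM E a' a + PP E a a') ≤ ∑ a ∈ A, ∑ a' ∈ A, n :=
    Finset.sum_le_sum fun a ha => Finset.sum_le_sum fun a' ha' => h.pair_le a a' ha ha'
  have var : ∑ b ∈ B, (((univ.filter fun a => E a b).card : ℤ) - m) ^ 2 =
      (∑ b ∈ B, ((univ.filter fun a => E a b).card) ^ 2 : ℕ) - 3 * m * m * n := by
    have : ∀ b ∈ B, (((univ.filter fun a => E a b).card : ℤ) - m) ^ 2 =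
      ((univ.filter fun a => E a b).card : ℤ) ^ 2
        - 2 * m * ((univ.filter fun a => E a b).card : ℤ) + m ^ 2 := by
      intro b _; ring
    rw [Finset.sum_congr rfl this, Finset.sum_add_distrib, Finset.sum_sub_distrib,
      ← Finset.mul_sum, Finset.sum_const, h.cB, ← Nat.cast_sum, s3]
    push_cast
    simp only [nsmul_eq_mul]
    push_cast
    ring
  have nn : ∀ b ∈ B, 0 ≤ (((univ.filter fun a => E a b).card : ℤ) - m) ^ 2 :=
    fun b _ => sq_nonneg _
  have var0 := Finset.sum_nonneg nn
  rw [tot, cst] at le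
  have le' : ((∑ b ∈ B, ((univ.filter fun a => E a b).card) ^ 2 : ℕ) : ℤ) ≤ 3 * m * m * n := by
    zify at le ⊢; linarith
  have sqeq : ((∑ b ∈ B, ((univ.filter fun a => E a b).card) ^ 2 : ℕ) : ℤ) = 3 * m * m * n := by
    linarith
  constructor
  · have eq : ∑ a ∈ A, ∑ a' ∈ A, (PM E a a' + PM E a' a + PP E a a') = ∑ a ∈ A, ∑ a' ∈ A, n := by
      rw [tot, cst]; zify at sqeq ⊢; rw [sqeq]; ring
    have := (Finset.sum_eq_sum_iff_of_le (fun a ha =>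
      Finset.sum_le_sum fun a' ha' => h.pair_le a a' ha ha')).1 eq
    intro a ha
    exact (Finset.sum_eq_sum_iff_of_le (fun a' ha' => h.pair_le a a' ha ha')).1 (this a ha)
  · rw [sqeq, sub_self, Finset.sum_eq_zero_iff_of_nonneg nn] at var
    intro b hb
    have := pow_eq_zero_iff (two_ne_zero) |>.1 (var b hb)
    omega

theorem Hyp.cover_of (h : Hyp A B E m n) {a a' : V} (ha : a ∈ A)
    (e : PM E a a' + PP E a a' = n) {b : V} (hb : E a b) : E b a' ∨ E a' b := by
  rw [← h.oA a ha] at e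
  unfold PM PP at e
  rw [← Finset.card_union_of_disjoint] at e
  · have := Finset.eq_of_subset_of_card_le (s := (univ.filter fun b => E a b ∧ E b a') ∪
      (univ.filter fun b => E a b ∧ E a' b)) (t := univ.filter fun w => E a w)
      (by intro b; simp only [Finset.mem_union, Finset.mem_filter]; tauto) e.ge
    have hb' : b ∈ univ.filter fun w => E a w := by simpa using hb
    rw [← this] at hb'
    simp only [Finset.mem_union, Finset.mem_filter] at hb'
    tauto
  · rw [Finset.disjoint_left]
    intro b; simp only [Finset.mem_filter]
    rintro ⟨-, -, h1⟩ ⟨-, -, h2⟩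
    exact h.ori _ _ h1 h2

theorem Hyp.two (h : Hyp A B E m n) {a b a' c : V} (ha : a ∈ A) (h1 : E a b) (h2 : E b a')
    (hc : E a c) : E c a' ∨ E a' c := by
  have ha' : a' ∈ A := h.swap.AB h2 (h.AB h1 ha)
  have := h.tight.1 a ha a' ha'
  rw [h.PM_zero h1 h2] at this
  exact h.cover_of ha (by omega) hc

theorem Hyp.three (h : Hyp A B E m n) {a b x : V} (ha : a ∈ A) (hx : x ∈ A) (h1 : E a b) :
    E b x ∨ E x b ∨ ∃ c, E x c ∧ E c a := by
  by_cases h0 : ∃ c, E x c ∧ E c a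
  · exact Or.inr (Or.inr h0)
  · have z : PM E x a = 0 := by
      unfold PM
      rw [Finset.card_eq_zero, Finset.filter_eq_empty_iff]
      intro c _ hc; exact h0 ⟨c, hc⟩
    have := h.tight.1 a ha x hx
    have := h.cover_of (a' := x) ha (by omega) h1
    tauto

theorem Hyp.rev (h : Hyp A B E m n) : Hyp A B (fun u v => E v u) m n :=
  ⟨h.cA, h.cB, h.disj, fun u v e => ((h.bip v u e).symm).imp And.symm And.symm,
    fun u v e => h.ori v u e, h.swap.tight.2, h.tight.2,
    fun a b c d h1 h2 h3 h4 => h.c4 d c b a h3 h2 h1 h4⟩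

theorem Hyp.nocommon (h : Hyp A B E m n) {a b a' c : V} (ha : a ∈ A) (h1 : E a b) (h2 : E b a')
    (hc : E a c) (hc' : E a' c) : False := by
  have hb := h.AB h1 ha
  have ha' : a' ∈ A := h.swap.AB h2 hb
  have hcB := h.AB hc ha
  set O := univ.filter fun w => E b w
  set I := univ.filter fun w => E w b
  set J := univ.filter fun w => E w c
  have cO : O.card = m := h.oB b hb
  have cI : I.card = m := h.tight.2 b hb
  have cJ : J.card = m := h.tight.2 c hcB
  have sub : A \ (O ∪ I) ⊆ J.erase a := by
    intro x hx
    simp only [O, I, J, Finset.mem_sdiff, Finset.mem_union, Finset.mem_filter, Finset.mem_univ,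
      true_and, not_or, Finset.mem_erase] at hx ⊢
    obtain ⟨hxA, hn1, hn2⟩ := hx
    refine ⟨fun k => hn2 (k ▸ h1), ?_⟩
    obtain ⟨d, hd1, hd2⟩ : ∃ d, E x d ∧ E d a := by
      rcases h.three ha hxA h1 with k | k | k
      · exact absurd k hn1
      · exact absurd k hn2
      · exact k
    obtain ⟨d', hd1', hd2'⟩ : ∃ d, E d x ∧ E a' d := by
      rcases h.rev.three ha' hxA h2 with k | k | k
      · exact absurd k hn2
      · exact absurd k hn1
      · exact k
    rcases h.three ha' hxA hc' with k | k | ⟨f, k1, k2⟩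
    · exact (h.c4 _ _ _ _ hc k hd1 hd2).elim
    · exact k
    · exact (h.c4 _ _ _ _ k1 k2 hd2' hd1').elim
  have c1 := Finset.card_le_card sub
  have haJ : a ∈ J := by simpa [J] using hc
  rw [Finset.card_erase_of_mem haJ] at c1
  have c2 := Finset.le_card_sdiff (O ∪ I) A
  have c3 := Finset.card_union_le O I
  have c4 : 0 < J.card := Finset.card_pos.2 ⟨a, haJ⟩
  have := h.cA
  omega

theorem Hyp.full (h : Hyp A B E m n) {a b a' c : V} (ha : a ∈ A) (h1 : E a b) (h2 : E b a')
    (hc : E a c) : E c a' :=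
  (h.two ha h1 h2 hc).resolve_right fun k => h.nocommon ha h1 h2 hc k

theorem union_of (A X Y Z : Finset V) (m : ℕ) (hA : A.card = 3 * m) (hX : X ⊆ A) (hY : Y ⊆ A)
    (hZ : Z ⊆ A) (cX : X.card = m) (cY : Y.card = m) (cZ : Z.card = m) (d1 : Disjoint X Y)
    (d2 : Disjoint X Z) (d3 : Disjoint Y Z) : X ∪ Y ∪ Z = A := by
  apply Finset.eq_of_subset_of_card_le
  · exact Finset.union_subset (Finset.union_subset hX hY) hZ
  · rw [Finset.card_union_of_disjoint (Finset.disjoint_union_left.2 ⟨d2, d3⟩),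
      Finset.card_union_of_disjoint d1]
    omega

theorem Hyp.main (h : Hyp A B E m n) (hm : 1 ≤ m) (hn : 1 ≤ n) : IsDStar A B E := by
  have exA : ∀ a ∈ A, ∃ b, E a b := by
    intro a ha
    have : 0 < (univ.filter fun w => E a w).card := by rw [h.oA a ha]; omega
    obtain ⟨b, hb⟩ := Finset.card_pos.1 this
    exact ⟨b, by simpa using hb⟩
  have exB : ∀ a ∈ B, ∃ b, E a b := by
    intro a ha
    have : 0 < (univ.filter fun w => E a w).card := by rw [h.oB a ha]; omega
    obtain ⟨b, hb⟩ := Finset.card_pos.1 this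
    exact ⟨b, by simpa using hb⟩
  obtain ⟨a0, ha0⟩ : A.Nonempty := by rw [← Finset.card_pos, h.cA]; omega
  obtain ⟨b0, e00⟩ := exA a0 ha0
  have hb0 := h.AB e00 ha0
  obtain ⟨a1, e01⟩ := exB b0 hb0
  have ha1 := h.swap.AB e01 hb0
  obtain ⟨b1, e11⟩ := exA a1 ha1
  have hb1 := h.AB e11 ha1
  obtain ⟨a2, e12⟩ := exB b1 hb1
  have ha2 := h.swap.AB e12 hb1
  obtain ⟨b2, e22⟩ := exA a2 ha2
  have hb2 := h.AB e22 ha2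
  have cAB : ∀ a ∈ A, ∀ b, E a b → ∀ x, E a x → ∀ y, E b y → E x y :=
    fun a ha b e x hx y hy => h.full ha e hy hx
  have cBA : ∀ a ∈ B, ∀ b, E a b → ∀ x, E a x → ∀ y, E b y → E x y :=
    fun a ha b e x hx y hy => h.swap.full ha e hy hx
  have k01 := cAB a0 ha0 b0 e00
  have k11 := cBA b0 hb0 a1 e01
  have k12 := cAB a1 ha1 b1 e11
  have k22 := cBA b1 hb1 a2 e12
  have k20 := cAB a2 ha2 b2 e22
  have dM12 : ∀ a, E b0 a → E b1 a → False := fun a p q => h.ori _ _ q (k11 a p b1 e11)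
  have dM20 : ∀ a, E b1 a → E b2 a → False := fun a p q => h.ori _ _ q (k22 a p b2 e22)
  have dM10 : ∀ a, E b0 a → E b2 a → False := fun a p q =>
    h.c4 a b1 a2 b2 (k11 a p b1 e11) e12 e22 q
  have dN01 : ∀ b, E a0 b → E a1 b → False := fun b p q => h.ori _ _ q (k01 b p a1 e01)
  have dN12 : ∀ b, E a1 b → E a2 b → False := fun b p q => h.ori _ _ q (k12 b p a2 e12)
  have dN02 : ∀ b, E a0 b → E a2 b → False := fun b p q =>
    h.c4 b a1 b1 a2 (k01 b p a1 e01) e11 e12 q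
  let O : V → Finset V := fun u => univ.filter fun w => E u w
  have mO : ∀ u w, w ∈ O u ↔ E u w := fun u w => by simp [O]
  have sA : ∀ b ∈ B, O b ⊆ A := fun b hb x hx => h.swap.AB ((mO _ _).1 hx) hb
  have sB : ∀ a ∈ A, O a ⊆ B := fun b hb x hx => h.AB ((mO _ _).1 hx) hb
  have dj : ∀ u v, (∀ x, E u x → E v x → False) → Disjoint (O u) (O v) := by
    intro u v k
    rw [Finset.disjoint_left]
    intro x hx hy; exact k x ((mO _ _).1 hx) ((mO _ _).1 hy)
  have uA : O b2 ∪ O b0 ∪ O b1 = A := union_of A _ _ _ m h.cA (sA _ hb2) (sA _ hb0) (sA _ hb1)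
    (h.oB _ hb2) (h.oB _ hb0) (h.oB _ hb1) (dj _ _ fun x p q => dM10 x q p)
    (dj _ _ fun x p q => dM20 x q p) (dj _ _ dM12)
  have uB : O a0 ∪ O a1 ∪ O a2 = B := union_of B _ _ _ n h.cB (sB _ ha0) (sB _ ha1) (sB _ ha2)
    (h.oA _ ha0) (h.oA _ ha1) (h.oA _ ha2) (dj _ _ dN01) (dj _ _ dN02) (dj _ _ dN12)
  have inA : ∀ a ∈ A, E b2 a ∨ E b0 a ∨ E b1 a := by
    intro a ha; rw [← uA] at ha; simpa [mO, or_assoc] using ha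
  have inB : ∀ a ∈ B, E a0 a ∨ E a1 a ∨ E a2 a := by
    intro a ha; rw [← uB] at ha; simpa [mO, or_assoc] using ha
  have k00' : ∀ a, E b2 a → ∀ b, E a b → E a0 b := by
    intro a ha b hb
    have haA := h.swap.AB ha hb2
    rcases inB b (h.AB hb haA) with k | k | k
    · exact k
    · exact (h.c4 a b a2 b2 hb (k12 b k a2 e12) e22 ha).elim
    · exact (h.ori _ _ hb (k20 b k a ha)).elim
  have k00 : ∀ a, E b2 a → ∀ b, E a0 b → E a b := by
    intro a ha b hb
    have haA := h.swap.AB ha hb2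
    have : O a = O a0 := Finset.eq_of_subset_of_card_le
      (fun x hx => (mO _ _).2 (k00' a ha x ((mO _ _).1 hx)))
      (by rw [h.oA a haA, h.oA a0 ha0])
    rw [← mO, this, mO]; exact hb
  let M : ZMod 3 → Finset V := ![O b2, O b0, O b1]
  let N : ZMod 3 → Finset V := ![O a0, O a1, O a2]
  have fa : ∀ {P : ZMod 3 → Prop}, P 0 → P 1 → P 2 → ∀ i, P i := by
    intro P p0 p1 p2 i
    fin_cases i
    · exact p0
    · exact p1
    · exact p2
  have M0 : M 0 = O b2 := rfl
  have M1 : M 1 = O b0 := rfl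
  have M2 : M 2 = O b1 := rfl
  have N0 : N 0 = O a0 := rfl
  have N1 : N 1 = O a1 := rfl
  have N2 : N 2 = O a2 := rfl
  have z1 : (0 : ZMod 3) + 1 = 1 := rfl
  have z2 : (1 : ZMod 3) + 1 = 2 := rfl
  have z3 : (2 : ZMod 3) + 1 = 0 := rfl
  have ex3 : ∀ {P : ZMod 3 → Prop}, (∃ i, P i) ↔ P 0 ∨ P 1 ∨ P 2 := by
    intro P
    constructor
    · rintro ⟨i, hi⟩
      revert hi
      exact fa (P := fun i => P i → P 0 ∨ P 1 ∨ P 2) (by tauto) (by tauto) (by tauto) i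
    · rintro (p | p | p)
      exacts [⟨_, p⟩, ⟨_, p⟩, ⟨_, p⟩]
  refine ⟨M, N, ?_, ?_, uA, uB, ?_, ?_, ?_⟩
  · apply fa <;> apply fa <;> intro hne <;> first | exact (hne rfl).elim | skip
    · exact dj _ _ fun x p q => dM10 x q p
    · exact dj _ _ fun x p q => dM20 x q p
    · exact dj _ _ dM10
    · exact dj _ _ dM12
    · exact dj _ _ dM20
    · exact dj _ _ fun x p q => dM12 x q p
  · apply fa <;> apply fa <;> intro hne <;> first | exact (hne rfl).elim | skip
    · exact dj _ _ dN01
    · exact dj _ _ dN02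
    · exact dj _ _ fun x p q => dN01 x q p
    · exact dj _ _ dN12
    · exact dj _ _ fun x p q => dN02 x q p
    · exact dj _ _ fun x p q => dN12 x q p
  · rw [h.cA]
    apply fa
    · rw [M0, h.oB _ hb2]
    · rw [M1, h.oB _ hb0]
    · rw [M2, h.oB _ hb1]
  · rw [h.cB]
    apply fa
    · rw [N0, h.oA _ ha0]
    · rw [N1, h.oA _ ha1]
    · rw [N2, h.oA _ ha2]
  · intro u v
    rw [ex3]
    simp only [z1, z2, z3, M0, M1, M2, N0, N1, N2, mO]
    constructor
    · intro e
      have ori := h.ori _ _ e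
      rcases h.bip _ _ e with ⟨p, q⟩ | ⟨p, q⟩
      · rcases inA u p with p | p | p <;> rcases inB v q with q | q | q
        · tauto
        · have := k00' u p v e; tauto
        · have := k00' u p v e; tauto
        · exact (ori (k01 v q u p)).elim
        · tauto
        · exact (h.c4 u v a0 b0 e (k20 v q a0 (by
            rcases inA a0 ha0 with r | r | r
            · exact r
            · exact (h.ori _ _ r e00).elim
            · exact (dN02 b0 e00 (by
                have := k22 a0 r b2 e22
                exact (dN02 b2 this e22).elim)).elim)) e00 p).elim
        · exact (h.c4 u v a1 b1 e (k01 v q a1 e01) e11 p).elim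
        · exact (ori (k12 v q u p)).elim
        · tauto
      · rcases inB u p with p | p | p <;> rcases inA v q with q | q | q
        · exact (ori (k00 v q u p)).elim
        · tauto
        · exact (h.c4 u v b2 a0 e (k22 v q b2 e22) (k20 b2 e22 a0 (by
            rcases inA a0 ha0 with r | r | r
            · exact r
            · exact (h.ori _ _ r e00).elim
            · exact (dN02 b2 (k22 a0 r b2 e22) e22).elim)) p).elim
        · exact (h.c4 u v b0 a1 e (k00 v q b0 e00) e01 p).elim
        · exact (ori (k11 v q u p)).elim
        · tauto
        · tauto
        · exact (h.c4 u v b1 a2 e (k11 v q b1 e11) e12 p).elim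
        · exact (ori (k22 v q u p)).elim
    · rintro ((⟨p, q⟩ | ⟨p, q⟩) | (⟨p, q⟩ | ⟨p, q⟩) | (⟨p, q⟩ | ⟨p, q⟩))
      · exact k00 u p v q
      · exact k01 u p v q
      · exact k11 u p v q
      · exact k12 u p v q
      · exact k22 u p v q
      · exact k20 u p v q
end

theorem C4_free_regular_oriented_bipartite_is_DStar {V : Type*} [Fintype V] [DecidableEq V]
    (A B : Finset V) (E : V → V → Prop) [DecidableRel E]
    (m1 n1 : ℕ) (hm1 : 1 ≤ m1) (hn1 : 1 ≤ n1)
    (hAcard : A.card = 3 * m1) (hBcard : B.card = 3 * n1)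
    (hdisj : Disjoint A B) (hcover : A ∪ B = Finset.univ)
    (hbip : ∀ u v, E u v → (u ∈ A ∧ v ∈ B) ∨ (u ∈ B ∧ v ∈ A))
    (horient : ∀ u v, E u v → ¬ E v u)
    (houtA : ∀ u ∈ A, OutDeg E u = n1)
    (houtB : ∀ v ∈ B, OutDeg E v = m1)
    (hnoC4 : ¬ HasDirC4 E) :
    IsDStar A B E := by
  have h : Hyp A B E m1 n1 := by
    refine ⟨hAcard, hBcard, hdisj, hbip, horient, houtA, houtB, ?_⟩
    intro a b c d h1 h2 h3 h4
    refine hnoC4 ⟨a, b, c, d, ?_, ?_, ?_, ?_, ?_, ?_, h1, h2, h3, h4⟩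
    · rintro rfl; exact horient _ _ h1 h1
    · rintro rfl; exact horient _ _ h1 h2
    · rintro rfl; exact horient _ _ h4 h4
    · rintro rfl; exact horient _ _ h2 h2
    · rintro rfl; exact horient _ _ h2 h3
    · rintro rfl; exact horient _ _ h3 h3
  exact h.main hm1 hn1
end
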